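/- arXiv:2310.11925 — 6 statements merged into one kernel-verified Lean document; each statement's English description precedes it below -/
import Mathlib

section
/- Let Q, R, S be n×n complex matrices such that the 2n×2n block matrix A = [[Q, R],[R†, S]] is positive semidefinite, and assume S is positive definite. Writing every complex matrix M as M = M_Re + i·M_Im with entrywise real and imaginary parts, the 2n×2n block matrix [[Q_Re, −R_Im],[−R_Imᵀ, S_Re]] (with real entries, viewed as a complex matrix) is positive semidefinite. -/
/-!
Conjugating the block matrix `A = [[Q, R], [Rᴴ, S]]` by the unitary `D = diag(1, i)` gives the
positive semidefinite matrix `Dᴴ A D = [[Q, iR], [(iR)ᴴ, S]]`. Since `Re (iR) = -R_Im`, its entrywise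
real part is the matrix in question, and the entrywise real part of a positive semidefinite matrix
is positive semidefinite (`posSemidef_mRe`).
-/

open Matrix BigOperators
open scoped ComplexOrder Classical

/-- Entrywise real part of a complex matrix. -/
noncomputable def mRe {m n : Type*} (A : Matrix m n ℂ) : Matrix m n ℝ :=
  Matrix.of fun i j => (A i j).re

/-- Entrywise imaginary part of a complex matrix. -/
noncomputable def mIm {m n : Type*} (A : Matrix m n ℂ) : Matrix m n ℝ :=
  Matrix.of fun i j => (A i j).im

/-- On a real vector, the quadratic form of `mRe M` is the real part of the form of `M`. -/
lemma posSemidef_mRe {m : Type*} [Fintype m] {M : Matrix m m ℂ} (hM : M.PosSemidef) :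
    (mRe M).PosSemidef := by
  rw [posSemidef_iff_dotProduct_mulVec] at hM ⊢
  refine ⟨?_, fun x => ?_⟩
  · ext i j
    have h := congrArg Complex.re (hM.1.apply i j)
    simpa [mRe] using h
  · have h := (Complex.le_def.1 (hM.2 fun i => (x i : ℂ))).1
    simpa [mRe, dotProduct, mulVec] using h

/-- If `[[Q, R], [Rᴴ, S]]` is positive semidefinite and `S` is positive definite, then the
real block matrix `[[Q_Re, −R_Im], [−R_Imᵀ, S_Re]]` is positive semidefinite. -/
theorem stmt1 {n : ℕ} (Q R S : Matrix (Fin n) (Fin n) ℂ)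
    (hblock : (Matrix.fromBlocks Q R Rᴴ S).PosSemidef)
    (hS : S.PosDef) :
    (Matrix.fromBlocks (mRe Q) (-(mIm R)) (-(mIm R)ᵀ) (mRe S)).PosSemidef := by
  have h := posSemidef_mRe
    (hblock.conjTranspose_mul_mul_same
      (fromBlocks 1 0 0 (Complex.I • 1) : Matrix (Fin n ⊕ Fin n) (Fin n ⊕ Fin n) ℂ))
  convert h using 1
  rw [fromBlocks_conjTranspose, fromBlocks_multiply, fromBlocks_multiply]
  ext (i | i) (j | j) <;> simp [mRe, mIm, smul_smul]
end

section
/- Let σ₁, σ₂ > 0, 0 ≤ c ≤ σ₁σ₂, and w₁, w₂ > 0 be real numbers, and set α = w₁σ₁² + w₂σ₂² and β = 2√(w₁w₂)·c (note α ≥ β). (i) Every pair of real numbers ε₁, ε₂ ≥ 0 satisfying the Ozawa-type constraint ε₁²σ₂² + σ₁²ε₂² + 2√(σ₁²σ₂² − c²)·ε₁ε₂ ≥ c² also satisfies w₁ε₁² + w₂ε₂² ≥ ½(α − √(α² − β²)). (ii) There exist ε₁, ε₂ ≥ 0 satisfying the constraint for which w₁ε₁² + w₂ε₂² = ½(α −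 √(α² − β²)). -/
/-!
Write `s = √(σ₁²σ₂² − c²)`, `R = √(α² − β²)`, `M = (α + R)/2`, `m = (α − R)/2`, so that `mM = w₁w₂c²`.
The constraint's quadratic form `Q` has determinant `c²`, and `M/(w₁w₂)` is its largest eigenvalue
relative to the form `E = w₁ε₁² + w₂ε₂²`. Indeed `a = M − w₂σ₂²` and `b = M − w₁σ₁²` are
nonnegative with `ab = w₁w₂s²`, hence
`M E − w₁w₂ Q = (√(w₁a) ε₁ − √(w₂b) ε₂)²`.
Since `mM = w₁w₂c²` and `M > 0`, the constraint `Q ≥ c²` forces `E ≥ m`. Equality holds at the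
nonnegative vector on the line `√(w₁a) ε₁ = √(w₂b) ε₂` scaled so that `E = m`.
-/

/-- The spectral data of the constraint form: with `M = (α + R)/2`, the difference
`M E − w₁w₂ Q` is the square of `p ε₁ − q ε₂` for some `p, q ≥ 0`. -/
lemma ozawa_square (σ₁ σ₂ c w₁ w₂ s R : ℝ) (hw₁ : 0 < w₁) (hw₂ : 0 < w₂)
    (hs0 : 0 ≤ s) (hs : s ^ 2 = σ₁ ^ 2 * σ₂ ^ 2 - c ^ 2) (hR0 : 0 ≤ R)
    (hR : R ^ 2 = (w₁ * σ₁ ^ 2 + w₂ * σ₂ ^ 2) ^ 2 - 4 * (w₁ * w₂) * c ^ 2) :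
    ∃ p q : ℝ, 0 ≤ p ∧ 0 ≤ q ∧ ∀ x y : ℝ,
      (w₁ * σ₁ ^ 2 + w₂ * σ₂ ^ 2 + R) / 2 * (w₁ * x ^ 2 + w₂ * y ^ 2)
        - w₁ * w₂ * (x ^ 2 * σ₂ ^ 2 + σ₁ ^ 2 * y ^ 2 + 2 * s * (x * y))
      = (p * x - q * y) ^ 2 := by
  -- `R² = (w₁σ₁² − w₂σ₂²)² + 4w₁w₂s²`, which bounds the difference of the weighted variances.
  have hd : |w₁ * σ₁ ^ 2 - w₂ * σ₂ ^ 2| ≤ R := by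
    refine abs_le_of_sq_le_sq ?_ hR0
    have : 0 ≤ w₁ * w₂ * s ^ 2 := by positivity
    rw [hs] at this
    nlinarith
  obtain ⟨hd1, hd2⟩ := abs_le.mp hd
  obtain ⟨a, ha⟩ : ∃ a, a = (w₁ * σ₁ ^ 2 - w₂ * σ₂ ^ 2 + R) / 2 := ⟨_, rfl⟩
  obtain ⟨b, hb⟩ : ∃ b, b = (w₂ * σ₂ ^ 2 - w₁ * σ₁ ^ 2 + R) / 2 := ⟨_, rfl⟩
  have ha0 : 0 ≤ a := by linarith
  have hb0 : 0 ≤ b := by linarith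
  have hab : a * b = w₁ * w₂ * s ^ 2 := by
    rw [ha, hb, hs]; linear_combination hR / 4
  have hp := Real.sq_sqrt (mul_nonneg hw₁.le ha0)
  have hq := Real.sq_sqrt (mul_nonneg hw₂.le hb0)
  have hpq : √(w₁ * a) * √(w₂ * b) = w₁ * w₂ * s := by
    rw [← Real.sqrt_mul (mul_nonneg hw₁.le ha0), ← Real.sqrt_sq (show 0 ≤ w₁ * w₂ * s by positivity)]
    congr 1
    linear_combination w₁ * w₂ * hab
  refine ⟨√(w₁ * a), √(w₂ * b), Real.sqrt_nonneg _, Real.sqrt_nonneg _, fun x y => ?_⟩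
  linear_combination (-x ^ 2) * hp - y ^ 2 * hq + 2 * x * y * hpq - w₁ * x ^ 2 * ha
    - w₂ * y ^ 2 * hb

/-- **Minimal weighted error from Ozawa's relation** (Section S6.A of the Supplementary
Material). With `α = w₁σ₁² + w₂σ₂²` and `β = 2√(w₁w₂)c`:
(i) every `ε₁, ε₂ ≥ 0` satisfying the Ozawa-type constraint
`ε₁²σ₂² + σ₁²ε₂² + 2√(σ₁²σ₂² − c²) ε₁ε₂ ≥ c²` satisfies
`w₁ε₁² + w₂ε₂² ≥ ½(α − √(α² − β²))`;
(ii) this value is attained by some admissible `ε₁, ε₂`. -/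
theorem stmt10 (σ₁ σ₂ c w₁ w₂ : ℝ) (hσ₁ : 0 < σ₁) (hσ₂ : 0 < σ₂)
    (hc0 : 0 ≤ c) (hc : c ≤ σ₁ * σ₂) (hw₁ : 0 < w₁) (hw₂ : 0 < w₂) :
    (∀ ε₁ ε₂ : ℝ, 0 ≤ ε₁ → 0 ≤ ε₂ →
      ε₁ ^ 2 * σ₂ ^ 2 + σ₁ ^ 2 * ε₂ ^ 2
        + 2 * Real.sqrt (σ₁ ^ 2 * σ₂ ^ 2 - c ^ 2) * (ε₁ * ε₂) ≥ c ^ 2 →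
      w₁ * ε₁ ^ 2 + w₂ * ε₂ ^ 2 ≥
        ((w₁ * σ₁ ^ 2 + w₂ * σ₂ ^ 2)
          - Real.sqrt ((w₁ * σ₁ ^ 2 + w₂ * σ₂ ^ 2) ^ 2
              - (2 * Real.sqrt (w₁ * w₂) * c) ^ 2)) / 2) ∧
    (∃ ε₁ ε₂ : ℝ, 0 ≤ ε₁ ∧ 0 ≤ ε₂ ∧
      ε₁ ^ 2 * σ₂ ^ 2 + σ₁ ^ 2 * ε₂ ^ 2
        + 2 * Real.sqrt (σ₁ ^ 2 * σ₂ ^ 2 - c ^ 2) * (ε₁ * ε₂) ≥ c ^ 2 ∧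
      w₁ * ε₁ ^ 2 + w₂ * ε₂ ^ 2 =
        ((w₁ * σ₁ ^ 2 + w₂ * σ₂ ^ 2)
          - Real.sqrt ((w₁ * σ₁ ^ 2 + w₂ * σ₂ ^ 2) ^ 2
              - (2 * Real.sqrt (w₁ * w₂) * c) ^ 2)) / 2) := by
  have hcc : c ^ 2 ≤ σ₁ ^ 2 * σ₂ ^ 2 := by
    rw [← mul_pow]; exact pow_le_pow_left₀ hc0 hc 2
  have hβ : (2 * √(w₁ * w₂) * c) ^ 2 = 4 * (w₁ * w₂) * c ^ 2 := by
    rw [mul_pow, mul_pow, Real.sq_sqrt (by positivity)]; ring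
  rw [hβ]
  have hdisc : 0 ≤ (w₁ * σ₁ ^ 2 + w₂ * σ₂ ^ 2) ^ 2 - 4 * (w₁ * w₂) * c ^ 2 := by
    have := mul_le_mul_of_nonneg_left hcc (mul_pos hw₁ hw₂).le
    nlinarith [sq_nonneg (w₁ * σ₁ ^ 2 - w₂ * σ₂ ^ 2)]
  have hs := Real.sq_sqrt (sub_nonneg.mpr hcc)
  have hs0 := Real.sqrt_nonneg (σ₁ ^ 2 * σ₂ ^ 2 - c ^ 2)
  have hR := Real.sq_sqrt hdisc
  have hR0 := Real.sqrt_nonneg ((w₁ * σ₁ ^ 2 + w₂ * σ₂ ^ 2) ^ 2 - 4 * (w₁ * w₂) * c ^ 2)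
  generalize √(σ₁ ^ 2 * σ₂ ^ 2 - c ^ 2) = s at *
  generalize √((w₁ * σ₁ ^ 2 + w₂ * σ₂ ^ 2) ^ 2 - 4 * (w₁ * w₂) * c ^ 2) = R at *
  obtain ⟨p, q, hp, hq, hsq⟩ := ozawa_square σ₁ σ₂ c w₁ w₂ s R hw₁ hw₂ hs0 hs hR0 hR
  have hα : 0 < w₁ * σ₁ ^ 2 + w₂ * σ₂ ^ 2 := by positivity
  generalize w₁ * σ₁ ^ 2 + w₂ * σ₂ ^ 2 = α at *
  have hM : 0 < (α + R) / 2 := by linarith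
  have hmM : (α + R) / 2 * ((α - R) / 2) = w₁ * w₂ * c ^ 2 := by
    linear_combination -hR / 4
  have hww : 0 < w₁ * w₂ := mul_pos hw₁ hw₂
  refine ⟨fun x y _ _ h => ?_, ?_⟩
  · refine le_of_mul_le_mul_left ?_ hM
    have h1 := mul_le_mul_of_nonneg_left h hww.le
    have h2 := hsq x y
    linarith [sq_nonneg (p * x - q * y)]
  · have hm : 0 ≤ (α - R) / 2 := by
      refine nonneg_of_mul_nonneg_right (a := (α + R) / 2) ?_ hM
      rw [hmM]; positivity
    -- A nonzero nonnegative direction in the top eigenspace; if `p = q = 0` any direction will do.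
    obtain ⟨x, y, hx, hy, hxy, hE⟩ : ∃ x y : ℝ, 0 ≤ x ∧ 0 ≤ y ∧ p * x = q * y ∧
        0 < w₁ * x ^ 2 + w₂ * y ^ 2 := by
      rcases hp.eq_or_lt with rfl | hp'
      · rcases hq.eq_or_lt with rfl | hq'
        · exact ⟨1, 0, by simp, by simp, by simp, by simpa using hw₁⟩
        · exact ⟨q, 0, hq, le_rfl, by ring, by positivity⟩
      · exact ⟨q, p, hq, hp, by ring, by positivity⟩
    have ht := Real.sq_sqrt (div_nonneg hm hE.le)
    have ht0 := Real.sqrt_nonneg ((α - R) / 2 / (w₁ * x ^ 2 + w₂ * y ^ 2))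
    generalize √((α - R) / 2 / (w₁ * x ^ 2 + w₂ * y ^ 2)) = t at *
    have hval : w₁ * (t * x) ^ 2 + w₂ * (t * y) ^ 2 = (α - R) / 2 := by
      rw [eq_div_iff hE.ne'] at ht
      linear_combination ht
    refine ⟨t * x, t * y, by positivity, by positivity, ?_, hval⟩
    have h2 := hsq (t * x) (t * y)
    rw [hval, hmM, show p * (t * x) - q * (t * y) = 0 by linear_combination t * hxy] at h2
    refine le_of_mul_le_mul_left ?_ hww
    linarith
end

section
/- For all real numbers α₁, α₂, β₁, β₂ with α₁ ≥ |β₁| and α₂ ≥ |β₂|, one has (α₁ − √(α₁² − β₁²)) + (α₂ − √(α₂² − β₂²)) ≥ (α₁ + α₂) − √((α₁ + α₂)² − (|β₁| + |β₂|)²). -/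
/-!
After moving terms, the claim is `s₁ + s₂ ≤ √((α₁ + α₂)² − (b₁ + b₂)²)` with `bᵢ = |βᵢ|` and
`sᵢ = √(αᵢ² − bᵢ²)`. Squaring reduces it to `s₁ s₂ ≤ α₁ α₂ − b₁ b₂`, the reversed Cauchy–Schwarz
inequality in the plane with Lorentzian form, which follows from the identity
`(α₁² − b₁²)(α₂² − b₂²) = (α₁ α₂ − b₁ b₂)² − (α₁ b₂ − α₂ b₁)²`.
-/

/-- Superadditivity of `x ↦ x − √(x² − y²)` (Section S6.B of the Supplementary Material):
for `α₁ ≥ |β₁|` and `α₂ ≥ |β₂|`,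
`(α₁ − √(α₁² − β₁²)) + (α₂ − √(α₂² − β₂²)) ≥ (α₁+α₂) − √((α₁+α₂)² − (|β₁|+|β₂|)²)`. -/
theorem stmt11 (α₁ α₂ β₁ β₂ : ℝ) (h₁ : |β₁| ≤ α₁) (h₂ : |β₂| ≤ α₂) :
    (α₁ - Real.sqrt (α₁ ^ 2 - β₁ ^ 2)) + (α₂ - Real.sqrt (α₂ ^ 2 - β₂ ^ 2)) ≥
      (α₁ + α₂) - Real.sqrt ((α₁ + α₂) ^ 2 - (|β₁| + |β₂|) ^ 2) := by
  have hb₁ : 0 ≤ |β₁| := abs_nonneg β₁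
  have hb₂ : 0 ≤ |β₂| := abs_nonneg β₂
  rw [← sq_abs β₁, ← sq_abs β₂]
  generalize |β₁| = b₁ at *
  generalize |β₂| = b₂ at *
  have hp₁ : 0 ≤ α₁ ^ 2 - b₁ ^ 2 := by nlinarith
  have hp₂ : 0 ≤ α₂ ^ 2 - b₂ ^ 2 := by nlinarith
  have hs₁ := Real.sq_sqrt hp₁
  have hs₂ := Real.sq_sqrt hp₂
  generalize Real.sqrt (α₁ ^ 2 - b₁ ^ 2) = s₁ at *
  generalize Real.sqrt (α₂ ^ 2 - b₂ ^ 2) = s₂ at *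
  have hprod : s₁ * s₂ ≤ α₁ * α₂ - b₁ * b₂ := by
    have hnonneg : 0 ≤ α₁ * α₂ - b₁ * b₂ :=
      sub_nonneg.2 (mul_le_mul h₁ h₂ hb₂ (hb₁.trans h₁))
    refine abs_le_of_sq_le_sq' ?_ hnonneg |>.2
    rw [mul_pow, hs₁, hs₂]
    linarith [sq_nonneg (α₁ * b₂ - α₂ * b₁)]
  have hsum : s₁ + s₂ ≤ Real.sqrt ((α₁ + α₂) ^ 2 - (b₁ + b₂) ^ 2) :=
    Real.le_sqrt_of_sq_le (by nlinarith [hprod, hs₁, hs₂])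
  linarith
end

section
/- Let Q be a finite index set, λ : Q → ℝ with λ_q ≥ 0, and α, β : Q → ℝ with α_q ≥ |β_q| for all q. Let A = ∑_q λ_q α_q and B = ∑_q λ_q |β_q|, and let α ∈ ℝ satisfy α ≥ A (so also α ≥ B). Then ∑_q (λ_q/2)(α_q − √(α_q² − β_q²)) ≥ ½(α − √(α² − B²)). -/
open BigOperators

/-!
Put `s q = √(a q ^ 2 - b q ^ 2)`, so that `(s q, |b q|)` is a plane vector of length `a q`.
With `T = ∑ lam * s`, `A = ∑ lam * a`, `B = ∑ lam * |b|`, the claim reads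
`(α - A) + T ≤ √(α ^ 2 - B ^ 2)`. The triangle inequality in the plane
(`sq_sum_add_sq_sum_le`) gives `T ^ 2 + B ^ 2 ≤ A ^ 2`; together with `T ≤ A` and `A ≤ α`
this yields the squared form of the claim.
-/

/-- The triangle inequality for a nonnegative combination of the plane vectors `(x q, y q)`,
whose lengths are at most `r q`. -/
lemma sq_sum_add_sq_sum_le {Q : Type*} [Fintype Q] (w x y r : Q → ℝ)
    (hw : ∀ q, 0 ≤ w q) (hr : ∀ q, 0 ≤ r q) (h : ∀ q, x q ^ 2 + y q ^ 2 ≤ r q ^ 2) :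
    (∑ q, w q * x q) ^ 2 + (∑ q, w q * y q) ^ 2 ≤ (∑ q, w q * r q) ^ 2 := by
  set X := ∑ q, w q * x q with hX
  set Y := ∑ q, w q * y q with hY
  set R := √(X ^ 2 + Y ^ 2)
  have hR : R ^ 2 = X ^ 2 + Y ^ 2 := Real.sq_sqrt (by positivity)
  have hR0 : 0 ≤ R := Real.sqrt_nonneg _
  have hcs : ∀ q, X * x q + Y * y q ≤ R * r q := fun q => by
    refine le_of_abs_le <| abs_le_of_sq_le_sq ?_ (mul_nonneg hR0 (hr q))
    rw [mul_pow, hR]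
    nlinarith [sq_nonneg (X * y q - Y * x q),
      mul_le_mul_of_nonneg_left (h q) (add_nonneg (sq_nonneg X) (sq_nonneg Y))]
  -- pair the total vector `(X, Y)` with itself and apply Cauchy–Schwarz to each summand
  have hRr : R ^ 2 ≤ R * ∑ q, w q * r q := by
    calc R ^ 2 = X * (∑ q, w q * x q) + Y * (∑ q, w q * y q) := by
          rw [hR, ← hX, ← hY]; ring
      _ = ∑ q, w q * (X * x q + Y * y q) := by
          rw [Finset.mul_sum, Finset.mul_sum, ← Finset.sum_add_distrib]
          exact Finset.sum_congr rfl fun q _ => by ring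
      _ ≤ ∑ q, w q * (R * r q) :=
          Finset.sum_le_sum fun q _ => mul_le_mul_of_nonneg_left (hcs q) (hw q)
      _ = R * ∑ q, w q * r q := by
          rw [Finset.mul_sum]
          exact Finset.sum_congr rfl fun q _ => by ring
  rw [← hR]
  nlinarith [sq_nonneg (R - ∑ q, w q * r q)]

/-- Abstract form of the comparison ℰ_A ≥ ℰ_Ozawa (Section S6.B of the Supplementary
Material): for nonnegative weights `λ_q`, `α_q ≥ |β_q|`, `A = ∑ λ_q α_q`,
`B = ∑ λ_q |β_q|`, and any `α ≥ A`,
`∑_q (λ_q/2)(α_q − √(α_q² − β_q²)) ≥ ½(α − √(α² − B²))`. -/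
theorem stmt12 {Q : Type*} [Fintype Q] (lam a b : Q → ℝ)
    (hlam : ∀ q, 0 ≤ lam q) (hab : ∀ q, |b q| ≤ a q)
    (α : ℝ) (hα : ∑ q, lam q * a q ≤ α) :
    ∑ q, (lam q / 2) * (a q - Real.sqrt ((a q) ^ 2 - (b q) ^ 2)) ≥
      (α - Real.sqrt (α ^ 2 - (∑ q, lam q * |b q|) ^ 2)) / 2 := by
  set B := ∑ q, lam q * |b q| with hB
  set A := ∑ q, lam q * a q with hA
  set s : Q → ℝ := fun q => √((a q) ^ 2 - (b q) ^ 2) with hs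
  have ha : ∀ q, 0 ≤ a q := fun q => (abs_nonneg _).trans (hab q)
  have hs2 : ∀ q, s q ^ 2 + |b q| ^ 2 = a q ^ 2 := fun q => by
    have h : (b q) ^ 2 ≤ (a q) ^ 2 := sq_le_sq.2 ((hab q).trans (le_abs_self _))
    rw [hs, sq_abs, Real.sq_sqrt (by linarith)]
    ring
  have hsa : ∀ q, s q ≤ a q := fun q =>
    le_of_abs_le <| abs_le_of_sq_le_sq (by nlinarith [hs2 q, sq_nonneg |b q|]) (ha q)
  have hTA : ∑ q, lam q * s q ≤ A :=
    Finset.sum_le_sum fun q _ => mul_le_mul_of_nonneg_left (hsa q) (hlam q)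
  have hmink := sq_sum_add_sq_sum_le lam s (fun q => |b q|) a hlam ha fun q => (hs2 q).le
  have key : α - A + ∑ q, lam q * s q ≤ √(α ^ 2 - B ^ 2) := by
    apply Real.le_sqrt_of_sq_le
    -- with `d = α - A` and `T = ∑ lam * s`, the gap is `(A² - B² - T²) + 2d(A - T)`
    nlinarith [mul_nonneg (sub_nonneg.2 hα) (sub_nonneg.2 hTA)]
  have hsum : ∑ q, (lam q / 2) * (a q - s q) = (A - ∑ q, lam q * s q) / 2 := by
    rw [hA, ← Finset.sum_sub_distrib, Finset.sum_div]
    exact Finset.sum_congr rfl fun q _ => by ring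
  change (α - √(α ^ 2 - B ^ 2)) / 2 ≤ ∑ q, (lam q / 2) * (a q - s q)
  rw [hsum]
  linarith
end

section
/- Let n ≥ 5 be a natural number and let H be an n×n Hermitian positive semidefinite complex matrix whose entrywise real part equals the identity matrix Iₙ. Writing J for the entrywise imaginary part of H, one has ‖J‖_F ≤ √n ≤ 2(n−1) − 2√(2(n−1)), and consequently (√(‖J‖_F + 1) − 1)² ≥ ‖J‖_F² / (2(n−1)). -/
/-!
The Schur product `H ⊙ H` is positive semidefinite, so its quadratic form at the all-ones vector,
`∑ᵢⱼ Hᵢⱼ²`, is nonnegative. Since `H = 1 + iJ`, the real part of this sum is `n - ‖J‖_F²`, whence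
`‖J‖_F ≤ √n`. With `a = √(2(n-1))`, the middle inequality amounts to `a²/2 + 1 ≤ a²(a-2)²`, which
holds for `a ≥ √8`. Finally, with `s = √(‖J‖_F + 1)`, the bound `‖J‖_F ≤ a² - 2a` reads
`s² ≤ (a-1)²`, so `s + 1 ≤ a` and `‖J‖_F² = (s-1)²(s+1)² ≤ (s-1)² a²`.
-/

open Matrix BigOperators
open scoped ComplexOrder

/-- Frobenius norm of a real matrix. -/
noncomputable def frob {m n : Type*} [Fintype m] [Fintype n] (A : Matrix m n ℝ) : ℝ :=
  Real.sqrt (∑ i, ∑ j, (A i j) ^ 2)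

theorem sum_mIm_sq_le {n : ℕ} (H : Matrix (Fin n) (Fin n) ℂ)
    (hH : H.PosSemidef) (hRe : mRe H = 1) :
    ∑ i, ∑ j, (mIm H i j) ^ 2 ≤ (n : ℝ) := by
  have h := (hH.hadamard hH).dotProduct_mulVec_nonneg 1
  have h2 := (Complex.le_def.1 h).1
  simp only [dotProduct, mulVec, Matrix.hadamard_apply, Pi.star_apply, Pi.one_apply, star_one,
    one_mul, mul_one, Complex.re_sum, Complex.mul_re, Complex.zero_re] at h2
  have hre : ∀ i j, (H i j).re = (1 : Matrix (Fin n) (Fin n) ℝ) i j := fun i j => by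
    rw [← hRe]; rfl
  simp only [hre, Finset.sum_sub_distrib, Matrix.one_apply, mul_ite, mul_one, mul_zero] at h2
  simp only [mIm, Matrix.of_apply, sq]
  simpa [Finset.sum_ite_eq, ← ite_and] using h2

/-- The middle inequality; `5 ≤ x` enters through `√(2(x-1)) ≥ √8 > 2.82`. -/
theorem sqrt_le_two_mul_sub {x : ℝ} (hx : 5 ≤ x) :
    Real.sqrt x ≤ 2 * (x - 1) - 2 * Real.sqrt (2 * (x - 1)) := by
  set a := Real.sqrt (2 * (x - 1)) with ha
  have ha2 : a ^ 2 = 2 * (x - 1) := Real.sq_sqrt (by linarith)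
  have ha3 : 2.82 ≤ a := Real.le_sqrt_of_sq_le (by norm_num; linarith)
  have hb : 0.67 ≤ (a - 2) ^ 2 := by nlinarith
  rw [← ha2]
  apply Real.sqrt_le_iff.2
  constructor
  · nlinarith
  · have : a ^ 2 * 0.67 ≤ a ^ 2 * (a - 2) ^ 2 := by gcongr
    nlinarith

/-- Comparison of the two error bounds, with `f` in the role of `‖J‖_F` and `m` of `2(n-1)`. -/
theorem sq_div_le_sqrt_sub_sq {f m : ℝ} (hf : 0 ≤ f) (hm : 4 ≤ m)
    (h : f ≤ m - 2 * Real.sqrt m) :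
    f ^ 2 / m ≤ (Real.sqrt (f + 1) - 1) ^ 2 := by
  set a := Real.sqrt m with ha
  have ha2 : a ^ 2 = m := Real.sq_sqrt (by linarith)
  have ha3 : 2 ≤ a := Real.le_sqrt_of_sq_le (by norm_num; linarith)
  set s := Real.sqrt (f + 1) with hs
  have hs0 : 0 ≤ s := Real.sqrt_nonneg _
  have hs2 : s ^ 2 = f + 1 := Real.sq_sqrt (by linarith)
  have hsa : s ≤ a - 1 := abs_le_of_sq_le_sq' (by nlinarith) (by linarith) |>.2
  rw [div_le_iff₀ (by linarith), ← ha2]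
  have hfs : f ^ 2 = (s - 1) ^ 2 * (s + 1) ^ 2 := by
    rw [show f = s ^ 2 - 1 by linarith]; ring
  rw [hfs]
  gcongr
  linarith

/-- Quantitative heart of Section S7: for `n ≥ 5` and Hermitian positive semidefinite `H`
with entrywise real part the identity, writing `J` for the imaginary part,
`‖J‖_F ≤ √n ≤ 2(n−1) − 2√(2(n−1))`, so `(√(‖J‖_F + 1) − 1)² ≥ ‖J‖_F²/(2(n−1))`. -/
theorem stmt15 {n : ℕ} (hn : 5 ≤ n) (H : Matrix (Fin n) (Fin n) ℂ)
    (hH : H.PosSemidef) (hRe : mRe H = 1) :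
    frob (mIm H) ≤ Real.sqrt n ∧
    Real.sqrt n ≤ 2 * ((n : ℝ) - 1) - 2 * Real.sqrt (2 * ((n : ℝ) - 1)) ∧
    (Real.sqrt (frob (mIm H) + 1) - 1) ^ 2 ≥ (frob (mIm H)) ^ 2 / (2 * ((n : ℝ) - 1)) := by
  have hn' : (5 : ℝ) ≤ n := by exact_mod_cast hn
  have h1 : frob (mIm H) ≤ Real.sqrt n := Real.sqrt_le_sqrt (sum_mIm_sq_le H hH hRe)
  have h2 := sqrt_le_two_mul_sub hn'
  exact ⟨h1, h2, sq_div_le_sqrt_sub_sq (Real.sqrt_nonneg _) (by linarith) (h1.trans h2)⟩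
end

section
/- Let ρ be a d×d density matrix, X₁,…,Xₙ Hermitian d×d complex matrices, and W an n×n Hermitian positive semidefinite matrix. For any finite POVM (M_m)_{m∈I} on ℂ^d and real coefficients f : Fin n × I → ℝ, define R_j = ∑_m f(j,m) M_m and the n×n error matrix Q with entries Q_{jk} = ∑_m f(j,m)f(k,m) Tr(ρM_m) − Tr(ρ R_j X_k) − Tr(ρ X_j R_k) + Tr(ρ X_j X_k). Then Re Tr(W Q) ≥ E₀, where E₀ is the infimum of Re Tr[(W ⊗ ρ)(𝕊 − ℝ𝕏† − 𝕏ℝ† + 𝕏𝕏†)] over all nd×nd block matrices 𝕊 with d×d blocks satisfying 𝕊_{jk} = 𝕊_{kj} = 𝕊_{jk}† and all Hermitian d×d matrices R′₁,…,R′ₙ, subject to 𝕊 − ℝℝ† being positive semidefinite; here ℝ and 𝕏 are the nd×d block-column matrices with blocks R′_j and X_j respectively, ℝℝ† has (j,k)-block R′_j R′_k, and W ⊗ ρ is the Kronecker product. -/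
/-!
The POVM itself supplies a feasible point of the semidefinite program whose objective equals the
weighted error. Take `S_{jk} = ∑ m, f(j,m) f(k,m) M_m` and `R_j = ∑ m, f(j,m) M_m`. Because
`∑ m, M_m = 1`, the `(j,k)` block of `𝕊 - ℝℝ†` is `∑ m, (f(j,m) - R_j) M_m (f(k,m) - R_k)`, a sum
of congruences of positive semidefinite matrices (`povm_block_identity`, `posSemidef_block`).

Since the infimum is taken in `ℝ`, the set of objective values must also be bounded below. It is
bounded by `0`: the second factor of the objective is `(𝕊 - ℝℝ†) + (ℝ - 𝕏)(ℝ - 𝕏)†`, and the trace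
of a product of two positive semidefinite matrices is nonnegative.
-/

open Matrix BigOperators Kronecker
open scoped ComplexOrder Classical

/-- The operator `R_j = ∑_m f_j(m) M_m` built from a POVM and real coefficients. -/
noncomputable def povmR {d : ℕ} {ι : Type*} [Fintype ι]
    (M : ι → Matrix (Fin d) (Fin d) ℂ) (g : ι → ℝ) : Matrix (Fin d) (Fin d) ℂ :=
  ∑ m, (g m : ℂ) • M m

/-- The `n × n` error matrix `Q` of a POVM approximation of the observables `X_j`:
`Q_{jk} = ∑_m f(j,m) f(k,m) Tr(ρ M_m) − Tr(ρ R_j X_k) − Tr(ρ X_j R_k) + Tr(ρ X_j X_k)`. -/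
noncomputable def errMat {d n : ℕ} {ι : Type*} [Fintype ι] (ρ : Matrix (Fin d) (Fin d) ℂ)
    (X : Fin n → Matrix (Fin d) (Fin d) ℂ) (M : ι → Matrix (Fin d) (Fin d) ℂ)
    (f : Fin n × ι → ℝ) : Matrix (Fin n) (Fin n) ℂ :=
  Matrix.of fun j k =>
    (∑ m, ((f (j, m) * f (k, m) : ℝ) : ℂ) * (ρ * M m).trace)
      - (ρ * povmR M (fun m => f (j, m)) * X k).trace
      - (ρ * X j * povmR M (fun m => f (k, m))).trace
      + (ρ * X j * X k).trace

/-- The optimal value `ℰ₀` of the paper's semidefinite program (Eq. (12)): the infimum of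
`Re Tr[(W ⊗ ρ)(𝕊 − ℝ𝕏† − 𝕏ℝ† + 𝕏𝕏†)]` over block matrices `𝕊` with
`𝕊_{jk} = 𝕊_{kj} = 𝕊_{jk}†` and Hermitian `R′_j`, subject to `𝕊 − ℝℝ† ⪰ 0`. -/
noncomputable def sdpValue {d n : ℕ} (ρ : Matrix (Fin d) (Fin d) ℂ)
    (W : Matrix (Fin n) (Fin n) ℂ) (X : Fin n → Matrix (Fin d) (Fin d) ℂ) : ℝ :=
  sInf { t : ℝ |
    ∃ (S : Fin n → Fin n → Matrix (Fin d) (Fin d) ℂ)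
      (R : Fin n → Matrix (Fin d) (Fin d) ℂ),
      (∀ j k, S j k = S k j) ∧ (∀ j k, (S j k).IsHermitian) ∧ (∀ j, (R j).IsHermitian) ∧
      (Matrix.of fun (p q : Fin n × Fin d) =>
        (S p.1 q.1 - R p.1 * R q.1) p.2 q.2).PosSemidef ∧
      t = ((W ⊗ₖ ρ) * Matrix.of fun (p q : Fin n × Fin d) =>
        (S p.1 q.1 - R p.1 * X q.1 - X p.1 * R q.1 + X p.1 * X q.1) p.2 q.2).trace.re }

/-- If `C` is the block column with blocks `A j`, the matrix in question is `C P C†`. -/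
lemma posSemidef_block {d n : ℕ} (A : Fin n → Matrix (Fin d) (Fin d) ℂ)
    {P : Matrix (Fin d) (Fin d) ℂ} (hP : P.PosSemidef) :
    (Matrix.of fun (p q : Fin n × Fin d) => (A p.1 * P * (A q.1)ᴴ) p.2 q.2).PosSemidef := by
  have h := hP.mul_mul_conjTranspose_same
    (Matrix.of fun (p : Fin n × Fin d) (b : Fin d) => A p.1 p.2 b)
  convert h using 1
  ext p q
  simp [Matrix.mul_apply]

open scoped MatrixOrder in
lemma posSemidef_trace_mul_re_nonneg {ν : Type*} [Fintype ν] {A B : Matrix ν ν ℂ}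
    (hA : A.PosSemidef) (hB : B.PosSemidef) : 0 ≤ (A * B).trace.re := by
  obtain ⟨C, rfl⟩ := CStarAlgebra.nonneg_iff_eq_star_mul_self.mp hA.nonneg
  rw [Matrix.star_eq_conjTranspose]
  rw [Matrix.mul_assoc, Matrix.trace_mul_comm]
  exact (Complex.le_def.mp (hB.mul_mul_conjTranspose_same C).trace_nonneg).1

/-- The trace of a Kronecker product against a block matrix, computed block by block. -/
lemma trace_kronecker_mul_block {d n : ℕ} (W : Matrix (Fin n) (Fin n) ℂ)
    (ρ : Matrix (Fin d) (Fin d) ℂ) (B : Fin n → Fin n → Matrix (Fin d) (Fin d) ℂ) :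
    ((W ⊗ₖ ρ) * Matrix.of fun (p q : Fin n × Fin d) => B p.1 q.1 p.2 q.2).trace =
      (W * Matrix.of fun j k => (ρ * B j k).trace).trace := by
  simp only [Matrix.trace, Matrix.diag_apply, Matrix.mul_apply, Matrix.of_apply,
    Fintype.sum_prod_type, Matrix.kroneckerMap_apply, Finset.mul_sum]
  refine Finset.sum_congr rfl fun j _ => ?_
  rw [Finset.sum_comm]
  refine Finset.sum_congr rfl fun k _ => Finset.sum_congr rfl fun a _ =>
    Finset.sum_congr rfl fun b _ => ?_
  ring

lemma povmR_isHermitian {d : ℕ} {ι : Type*} [Fintype ι] {M : ι → Matrix (Fin d) (Fin d) ℂ}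
    (hM : ∀ m, (M m).IsHermitian) (g : ι → ℝ) : (povmR M g).IsHermitian := by
  unfold povmR Matrix.IsHermitian
  rw [Matrix.conjTranspose_sum]
  exact Finset.sum_congr rfl fun m _ => by simp [Matrix.conjTranspose_smul, (hM m).eq]

/-- The polarized variance identity for the second moments of a POVM. -/
lemma povm_block_identity {d : ℕ} {ι : Type*} [Fintype ι] {M : ι → Matrix (Fin d) (Fin d) ℂ}
    (hsum : ∑ m, M m = 1) (g h : ι → ℝ) :
    povmR M (fun m => g m * h m) - povmR M g * povmR M h =
      ∑ m, ((g m : ℂ) • 1 - povmR M g) * M m * ((h m : ℂ) • 1 - povmR M h) := by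
  have key : ∀ m, ((g m : ℂ) • 1 - povmR M g) * M m * ((h m : ℂ) • 1 - povmR M h) =
      ((g m * h m : ℝ) : ℂ) • M m - ((g m : ℂ) • M m) * povmR M h
        - povmR M g * ((h m : ℂ) • M m) + povmR M g * M m * povmR M h := by
    intro m
    simp only [sub_mul, mul_sub, smul_mul_assoc, mul_smul_comm, one_mul, mul_one, smul_sub,
      smul_smul, Complex.ofReal_mul]
    rw [mul_comm (h m : ℂ)]
    abel
  simp only [key, Finset.sum_add_distrib, Finset.sum_sub_distrib, ← Finset.sum_mul,
    ← Finset.mul_sum, hsum, mul_one]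
  change _ = povmR M (fun m => g m * h m) - povmR M g * povmR M h - povmR M g * povmR M h
    + povmR M g * povmR M h
  abel

/-- **The paper's semidefinite-programming error-tradeoff relation ℰ ≥ ℰ₀** (Eq. (12)):
for any density matrix `ρ`, Hermitian observables `X_j`, Hermitian `W ⪰ 0`, any finite POVM
`(M_m)` and real coefficients `f`, the weighted error `Re Tr(W Q)` is at least the SDP
value `ℰ₀`. -/
theorem stmt17 {d n : ℕ} (ρ : Matrix (Fin d) (Fin d) ℂ)
    (hρ : ρ.PosSemidef) (hρtr : ρ.trace = 1)
    (X : Fin n → Matrix (Fin d) (Fin d) ℂ) (hX : ∀ j, (X j).IsHermitian)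
    (W : Matrix (Fin n) (Fin n) ℂ) (hW : W.PosSemidef)
    {ι : Type*} [Fintype ι] (M : ι → Matrix (Fin d) (Fin d) ℂ)
    (hM : ∀ m, (M m).PosSemidef) (hsum : ∑ m, M m = 1)
    (f : Fin n × ι → ℝ) :
    ((W * errMat ρ X M f).trace).re ≥ sdpValue ρ W X := by
  apply csInf_le
  · refine ⟨0, ?_⟩
    rintro t ⟨S, R, -, -, hR, hpsd, rfl⟩
    refine posSemidef_trace_mul_re_nonneg (hW.kronecker hρ) ?_
    convert hpsd.add (posSemidef_block (fun j => R j - X j) Matrix.PosSemidef.one) using 1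
    ext p q
    have hblock : S p.1 q.1 - R p.1 * X q.1 - X p.1 * R q.1 + X p.1 * X q.1 =
        (S p.1 q.1 - R p.1 * R q.1) + (R p.1 - X p.1) * 1 * (R q.1 - X q.1)ᴴ := by
      rw [mul_one, Matrix.conjTranspose_sub, (hR _).eq, (hX _).eq]
      noncomm_ring
    exact congrFun (congrFun hblock p.2) q.2
  · have hH : ∀ m, (M m).IsHermitian := fun m => (hM m).isHermitian
    refine ⟨fun j k => povmR M (fun m => f (j, m) * f (k, m)),
      fun j => povmR M (fun m => f (j, m)), fun j k => by simp only [mul_comm],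
      fun j k => povmR_isHermitian hH _, fun j => povmR_isHermitian hH _, ?_, ?_⟩
    · convert Matrix.posSemidef_sum Finset.univ fun m _ => posSemidef_block
        (fun j : Fin n => (f (j, m) : ℂ) • 1 - povmR M (fun m => f (j, m))) (hM m) using 1
      ext p q
      rw [Matrix.of_apply, povm_block_identity hsum]
      simp [Matrix.sum_apply, (povmR_isHermitian hH _).eq, Matrix.conjTranspose_smul]
    · rw [trace_kronecker_mul_block W ρ fun j k => povmR M (fun m => f (j, m) * f (k, m))
        - povmR M (fun m => f (j, m)) * X k - X j * povmR M (fun m => f (k, m)) + X j * X k]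
      congr 4
      ext j k
      have hS : (ρ * povmR M (fun m => f (j, m) * f (k, m))).trace =
          ∑ m, ((f (j, m) * f (k, m) : ℝ) : ℂ) * (ρ * M m).trace := by
        simp [povmR, Finset.mul_sum, Matrix.trace_sum]
      simp only [errMat, Matrix.of_apply, mul_add, mul_sub, Matrix.trace_add, Matrix.trace_sub,
        hS, mul_assoc]
end
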